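/- Assume A is standardized and let x⁰ ∈ range(Aᵀ). For each sequence s = (i_0,…,i_{k−1}) ∈ {1,…,m}^k define iterates by x⁰_s = x⁰ and x^{j+1}_s = x^j_s − (A^{(i_j)}x^j_s − b_{i_j})·(A^{(i_j)})ᵀ for 0 ≤ j < k. Then (1/m^k) Σ_{s ∈ {1,…,m}^k} ‖x^k_s − x⋆‖₂² ≤ (1 − λ_min⁺(AᵀA)/m)^k · ‖x⁰ − x⋆‖₂². -/

import Mathlib

open Matrix Finset

/-- The largest eigenvalue of a square real matrix (as the supremum of its
eigenvalue set). -/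
noncomputable def maxEig {k : ℕ} (M : Matrix (Fin k) (Fin k) ℝ) : ℝ :=
  sSup {μ : ℝ | Module.End.HasEigenvalue (Matrix.mulVecLin M) μ}

/-- The smallest positive eigenvalue of a square real matrix. -/
noncomputable def minPosEig {k : ℕ} (M : Matrix (Fin k) (Fin k) ℝ) : ℝ :=
  sInf {μ : ℝ | Module.End.HasEigenvalue (Matrix.mulVecLin M) μ ∧ 0 < μ}

/-- The restriction of `A` to the rows indexed by `I`. -/
def rowSub {m n : ℕ} (A : Matrix (Fin m) (Fin n) ℝ) (I : Finset (Fin m)) :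
    Matrix {i : Fin m // i ∈ I} (Fin n) ℝ :=
  fun i j => A i.1 j

/-- Squared Euclidean norm. -/
noncomputable def sqNorm {k : ℕ} (v : Fin k → ℝ) : ℝ := ∑ j, (v j) ^ 2

/-- `xp` is the exact block Kaczmarz update of `x` with respect to the row
index set `I`: it satisfies the equations indexed by `I` and minimizes the
distance to `x` among all such points (hence is the orthogonal projection of
`x` onto the affine solution set, which is the unique such minimizer). -/
def IsKaczmarzUpdate {m n : ℕ} (A : Matrix (Fin m) (Fin n) ℝ)
    (b : Fin m → ℝ) (I : Finset (Fin m)) (x xp : Fin n → ℝ) : Prop :=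
  (∀ i ∈ I, A i ⬝ᵥ xp = b i) ∧
  ∀ y : Fin n → ℝ, (∀ i ∈ I, A i ⬝ᵥ y = b i) → sqNorm (xp - x) ≤ sqNorm (y - x)

/-- `I` is a greedy `δ`-subset of `τ` for `x`: `I ⊆ τ`, `|I| = δ`, and the
residual entries on `I` dominate (in absolute value) those on `τ \ I`. -/
def IsGreedySubset {m n : ℕ} (A : Matrix (Fin m) (Fin n) ℝ) (b : Fin m → ℝ)
    (x : Fin n → ℝ) (δ : ℕ) (τ I : Finset (Fin m)) : Prop :=
  I ⊆ τ ∧ I.card = δ ∧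
    ∀ i ∈ I, ∀ j ∈ τ \ I, |A j ⬝ᵥ x - b j| ≤ |A i ⬝ᵥ x - b i|

/-- The randomized-Kaczmarz iterates along a finite sequence of row indices:
`rkIterate A b x0 k s` is the result of applying, starting from `x0`, the
single-row Kaczmarz updates with rows `s 0, s 1, …, s (k-1)` in order. -/
noncomputable def rkIterate {m n : ℕ} (A : Matrix (Fin m) (Fin n) ℝ)
    (b : Fin m → ℝ) (x0 : Fin n → ℝ) : (k : ℕ) → (Fin k → Fin m) → (Fin n → ℝ)
  | 0, _ => x0
  | k + 1, s =>
      let xk := rkIterate A b x0 k (fun j => s j.castSucc)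
      fun j => xk j - (A (s (Fin.last k)) ⬝ᵥ xk - b (s (Fin.last k))) * A (s (Fin.last k)) j

/-!
One Kaczmarz step with a row `a` of norm at most one lowers the squared error `‖e‖²` by at least
`⟨a, e⟩²`, so averaging over the rows lowers it by at least `‖A e‖² / m`. Errors stay in the row
space, which is orthogonal to `ker (AᵀA) = ker A`; expanding `e` in an eigenbasis of `AᵀA` therefore
involves positive eigenvalues only, and `‖A e‖² = ⟨e, AᵀA e⟩ ≥ λ_min⁺(AᵀA) ‖e‖²`.
-/

section SpectralBound

theorem sqNorm_eq_dotProduct {n : ℕ} (v : Fin n → ℝ) : sqNorm v = v ⬝ᵥ v := by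
  simp only [sqNorm, dotProduct, sq]

theorem sqNorm_nonneg {n : ℕ} (v : Fin n → ℝ) : 0 ≤ sqNorm v :=
  sum_nonneg fun _ _ => sq_nonneg _

theorem sqNorm_pos {n : ℕ} {v : Fin n → ℝ} (hv : v ≠ 0) : 0 < sqNorm v :=
  (sqNorm_nonneg v).lt_of_ne' fun h =>
    hv (dotProduct_self_eq_zero.mp (sqNorm_eq_dotProduct v ▸ h))

theorem sum_dotProduct_orthonormalBasis_mul {ι κ : Type*} [Fintype ι] [Fintype κ]
    (u : OrthonormalBasis ι ℝ (EuclideanSpace ℝ κ)) (x y : κ → ℝ) :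
    ∑ i, ((u i).ofLp ⬝ᵥ x) * ((u i).ofLp ⬝ᵥ y) = x ⬝ᵥ y := by
  have parseval := u.sum_inner_mul_inner (WithLp.toLp 2 x) (WithLp.toLp 2 y)
  simp only [EuclideanSpace.inner_eq_star_dotProduct, star_trivial] at parseval
  simp only [dotProduct_comm x y, ← parseval, dotProduct_comm y]

theorem dotProduct_mulVec_eq_sum_eigenvalues {ι : Type*} [Fintype ι] [DecidableEq ι]
    {M : Matrix ι ι ℝ} (hM : M.IsHermitian) (v : ι → ℝ) :
    v ⬝ᵥ M *ᵥ v =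
      ∑ i, hM.eigenvalues i *
        (((hM.eigenvectorBasis i).ofLp ⬝ᵥ v) * ((hM.eigenvectorBasis i).ofLp ⬝ᵥ v)) := by
  have hMt : Mᵀ = M := by simpa using hM.eq
  have hcoord (i : ι) : (hM.eigenvectorBasis i).ofLp ⬝ᵥ M *ᵥ v =
      hM.eigenvalues i * ((hM.eigenvectorBasis i).ofLp ⬝ᵥ v) := by
    rw [dotProduct_mulVec, ← mulVec_transpose, hMt, hM.mulVec_eigenvectorBasis i,
      smul_dotProduct, smul_eq_mul]
  rw [← sum_dotProduct_orthonormalBasis_mul hM.eigenvectorBasis v]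
  exact sum_congr rfl fun i _ => by rw [hcoord, mul_left_comm]

theorem minPosEig_le_eigenvalues {n : ℕ} {M : Matrix (Fin n) (Fin n) ℝ} (hM : M.IsHermitian)
    {i : Fin n} (hi : 0 < hM.eigenvalues i) : minPosEig M ≤ hM.eigenvalues i := by
  have hne : (hM.eigenvectorBasis i).ofLp ≠ 0 := fun h =>
    hM.eigenvectorBasis.orthonormal.ne_zero i ((WithLp.ofLp_eq_zero 2).mp h)
  have heig : Module.End.HasEigenvalue M.mulVecLin (hM.eigenvalues i) :=
    Module.End.hasEigenvalue_of_hasEigenvector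
      ⟨Module.End.mem_eigenspace_iff.mpr (hM.mulVec_eigenvectorBasis i), hne⟩
  exact csInf_le ⟨0, fun _ h => h.2.le⟩ ⟨heig, hi⟩

theorem minPosEig_mul_sqNorm_le_dotProduct_mulVec {n : ℕ} {M : Matrix (Fin n) (Fin n) ℝ}
    (hM : M.PosSemidef) {v : Fin n → ℝ} (hv : ∀ u, M *ᵥ u = 0 → u ⬝ᵥ v = 0) :
    minPosEig M * sqNorm v ≤ v ⬝ᵥ M *ᵥ v := by
  have hH := hM.isHermitian
  rw [dotProduct_mulVec_eq_sum_eigenvalues hH, sqNorm_eq_dotProduct,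
    ← sum_dotProduct_orthonormalBasis_mul hH.eigenvectorBasis, mul_sum]
  refine sum_le_sum fun i _ => ?_
  rcases (hM.eigenvalues_nonneg i).eq_or_lt' with hzero | hpos
  · have hker : M *ᵥ (hH.eigenvectorBasis i).ofLp = 0 := by
      rw [hH.mulVec_eigenvectorBasis i, hzero, zero_smul]
    simp [hv _ hker]
  · exact mul_le_mul_of_nonneg_right (minPosEig_le_eigenvalues hH hpos) (mul_self_nonneg _)

theorem minPosEig_transpose_mul_self_mul_sqNorm_le {m n : ℕ} (A : Matrix (Fin m) (Fin n) ℝ)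
    {v : Fin n → ℝ} (hv : v ∈ LinearMap.range Aᵀ.mulVecLin) :
    minPosEig (Aᵀ * A) * sqNorm v ≤ sqNorm (A *ᵥ v) := by
  have hpsd : (Aᵀ * A).PosSemidef := by simpa using posSemidef_conjTranspose_mul_self A
  have horth (u : Fin n → ℝ) (hu : (Aᵀ * A) *ᵥ u = 0) : u ⬝ᵥ v = 0 := by
    have hAu : A *ᵥ u = 0 := (conjTranspose_mul_self_mulVec_eq_zero A u).mp (by simpa using hu)
    obtain ⟨w, rfl⟩ := hv
    rw [mulVecLin_apply, dotProduct_transpose_mulVec, hAu, dotProduct_zero]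
  calc minPosEig (Aᵀ * A) * sqNorm v
      ≤ v ⬝ᵥ (Aᵀ * A) *ᵥ v := minPosEig_mul_sqNorm_le_dotProduct_mulVec hpsd horth
    _ = sqNorm (A *ᵥ v) := by
      rw [← mulVec_mulVec, dotProduct_transpose_mulVec, sqNorm_eq_dotProduct]

theorem row_mem_range_transpose {m n : Type*} [Fintype m] (A : Matrix m n ℝ) (i : m) :
    A i ∈ LinearMap.range Aᵀ.mulVecLin := by
  classical exact ⟨Pi.single i 1, by ext j; simp⟩

theorem sqNorm_mulVec_le {m n : ℕ} {A : Matrix (Fin m) (Fin n) ℝ}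
    (hrow : ∀ i, sqNorm (A i) ≤ 1) (v : Fin n → ℝ) : sqNorm (A *ᵥ v) ≤ m * sqNorm v := by
  have hentry (i : Fin m) : (A *ᵥ v) i ^ 2 ≤ sqNorm v :=
    (sum_mul_sq_le_sq_mul_sq univ (A i) v).trans
      (mul_le_of_le_one_left (sqNorm_nonneg v) (hrow i))
  simpa [sqNorm] using sum_le_card_nsmul univ _ (sqNorm v) fun i _ => hentry i

theorem minPosEig_transpose_mul_self_le {m n : ℕ} {A : Matrix (Fin m) (Fin n) ℝ} (hA : A ≠ 0)
    (hrow : ∀ i, sqNorm (A i) ≤ 1) : minPosEig (Aᵀ * A) ≤ m := by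
  obtain ⟨i, hi⟩ : ∃ i, A i ≠ 0 := Function.ne_iff.mp hA
  exact le_of_mul_le_mul_right
    ((minPosEig_transpose_mul_self_mul_sqNorm_le A (row_mem_range_transpose A i)).trans
      (sqNorm_mulVec_le hrow _)) (sqNorm_pos hi)

end SpectralBound

section KaczmarzStep

/-- The Kaczmarz update of `x` for the single equation `a ⬝ᵥ x = β`. The formula omits the division
by `‖a‖²`, so it is the projection onto the solution hyperplane when `‖a‖ = 1` and an
under-relaxed projection when `0 < ‖a‖ < 1`. -/
def kaczmarzStep {ι : Type*} [Fintype ι] (a : ι → ℝ) (β : ℝ) (x : ι → ℝ) : ι → ℝ :=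
  x - (a ⬝ᵥ x - β) • a

theorem kaczmarzStep_sub_mem {ι : Type*} [Fintype ι] {S : Submodule ℝ (ι → ℝ)}
    {a x z : ι → ℝ} (ha : a ∈ S) (hx : x - z ∈ S) (β : ℝ) : kaczmarzStep a β x - z ∈ S := by
  rw [kaczmarzStep, sub_right_comm]
  exact S.sub_mem hx (S.smul_mem _ ha)

theorem sqNorm_kaczmarzStep_sub_le {n : ℕ} {a : Fin n → ℝ} (ha : sqNorm a ≤ 1)
    (x z : Fin n → ℝ) :
    sqNorm (kaczmarzStep a (a ⬝ᵥ z) x - z) ≤ sqNorm (x - z) - (a ⬝ᵥ (x - z)) ^ 2 := by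
  have herror : kaczmarzStep a (a ⬝ᵥ z) x - z = (x - z) - (a ⬝ᵥ (x - z)) • a := by
    rw [kaczmarzStep, sub_right_comm, dotProduct_sub]
  have hexpand (e : Fin n → ℝ) :
      sqNorm (e - (a ⬝ᵥ e) • a) = sqNorm e - (2 - sqNorm a) * (a ⬝ᵥ e) ^ 2 := by
    simp only [sqNorm_eq_dotProduct, sub_dotProduct, dotProduct_sub, smul_dotProduct,
      dotProduct_smul, smul_eq_mul, dotProduct_comm e a]
    ring
  rw [herror, hexpand]
  exact sub_le_sub_left (le_mul_of_one_le_left (sq_nonneg _) (by linarith)) _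

theorem sum_sqNorm_kaczmarzStep_sub_le {m n : ℕ} {A : Matrix (Fin m) (Fin n) ℝ}
    (hrow : ∀ i, sqNorm (A i) ≤ 1) {x z : Fin n → ℝ}
    (hx : x - z ∈ LinearMap.range Aᵀ.mulVecLin) :
    ∑ i, sqNorm (kaczmarzStep (A i) ((A *ᵥ z) i) x - z) ≤
      (m - minPosEig (Aᵀ * A)) * sqNorm (x - z) :=
  calc ∑ i, sqNorm (kaczmarzStep (A i) ((A *ᵥ z) i) x - z)
      ≤ ∑ i, (sqNorm (x - z) - (A *ᵥ (x - z)) i ^ 2) :=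
        sum_le_sum fun i _ => sqNorm_kaczmarzStep_sub_le (hrow i) x z
    _ = m * sqNorm (x - z) - sqNorm (A *ᵥ (x - z)) := by
        simp [sum_sub_distrib, sqNorm]
    _ ≤ (m - minPosEig (Aᵀ * A)) * sqNorm (x - z) := by
        rw [sub_mul]
        exact sub_le_sub_left (minPosEig_transpose_mul_self_mul_sqNorm_le A hx) _

end KaczmarzStep

section RandomizedKaczmarz

variable {m n : ℕ}

theorem rkIterate_succ (A : Matrix (Fin m) (Fin n) ℝ) (b : Fin m → ℝ) (x0 : Fin n → ℝ) (k : ℕ)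
    (s : Fin (k + 1) → Fin m) :
    rkIterate A b x0 (k + 1) s =
      kaczmarzStep (A (s (Fin.last k))) (b (s (Fin.last k)))
        (rkIterate A b x0 k (Fin.init s)) :=
  rfl

theorem rkIterate_snoc (A : Matrix (Fin m) (Fin n) ℝ) (b : Fin m → ℝ) (x0 : Fin n → ℝ) (k : ℕ)
    (s : Fin k → Fin m) (i : Fin m) :
    rkIterate A b x0 (k + 1) (Fin.snoc s i) =
      kaczmarzStep (A i) (b i) (rkIterate A b x0 k s) := by
  rw [rkIterate_succ, Fin.snoc_last, Fin.init_snoc]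

theorem rkIterate_sub_mem {A : Matrix (Fin m) (Fin n) ℝ} {S : Submodule ℝ (Fin n → ℝ)}
    (hrow : ∀ i, A i ∈ S) {x0 z : Fin n → ℝ} (hx0 : x0 - z ∈ S) (b : Fin m → ℝ) (k : ℕ)
    (s : Fin k → Fin m) : rkIterate A b x0 k s - z ∈ S := by
  induction k with
  | zero => exact hx0
  | succ k ih =>
    rw [rkIterate_succ]
    exact kaczmarzStep_sub_mem (hrow _) (ih _) _

theorem sum_rkIterate_succ {M : Type*} [AddCommMonoid M] (A : Matrix (Fin m) (Fin n) ℝ)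
    (b : Fin m → ℝ) (x0 : Fin n → ℝ) (k : ℕ) (f : (Fin n → ℝ) → M) :
    ∑ s : Fin (k + 1) → Fin m, f (rkIterate A b x0 (k + 1) s) =
      ∑ s : Fin k → Fin m, ∑ i, f (kaczmarzStep (A i) (b i) (rkIterate A b x0 k s)) := by
  rw [← (Fin.snocEquiv fun _ => Fin m).sum_comp, Fintype.sum_prod_type_right]
  exact sum_congr rfl fun s _ => sum_congr rfl fun i _ =>
    congrArg f (rkIterate_snoc A b x0 k s i)

theorem sum_sqNorm_rkIterate_sub_le {A : Matrix (Fin m) (Fin n) ℝ} (hA : A ≠ 0)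
    (hrow : ∀ i, sqNorm (A i) ≤ 1) {x0 z : Fin n → ℝ}
    (hx0 : x0 - z ∈ LinearMap.range Aᵀ.mulVecLin) (k : ℕ) :
    ∑ s : Fin k → Fin m, sqNorm (rkIterate A (A *ᵥ z) x0 k s - z) ≤
      (m - minPosEig (Aᵀ * A)) ^ k * sqNorm (x0 - z) := by
  induction k with
  | zero => simp [rkIterate]
  | succ k ih =>
    have hfactor : 0 ≤ m - minPosEig (Aᵀ * A) :=
      sub_nonneg.mpr (minPosEig_transpose_mul_self_le hA hrow)
    calc ∑ s : Fin (k + 1) → Fin m, sqNorm (rkIterate A (A *ᵥ z) x0 (k + 1) s - z)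
        = ∑ s : Fin k → Fin m, ∑ i,
            sqNorm (kaczmarzStep (A i) ((A *ᵥ z) i) (rkIterate A (A *ᵥ z) x0 k s) - z) :=
          sum_rkIterate_succ A _ x0 k fun x => sqNorm (x - z)
      _ ≤ ∑ s : Fin k → Fin m,
            (m - minPosEig (Aᵀ * A)) * sqNorm (rkIterate A (A *ᵥ z) x0 k s - z) :=
          sum_le_sum fun s _ => sum_sqNorm_kaczmarzStep_sub_le hrow
            (rkIterate_sub_mem (row_mem_range_transpose A) hx0 _ k s)
      _ ≤ (m - minPosEig (Aᵀ * A)) * ((m - minPosEig (Aᵀ * A)) ^ k * sqNorm (x0 - z)) := by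
          rw [← mul_sum]
          exact mul_le_mul_of_nonneg_left ih hfactor
      _ = (m - minPosEig (Aᵀ * A)) ^ (k + 1) * sqNorm (x0 - z) := by
          rw [pow_succ', mul_assoc]

theorem rk_expected_convergence_general {A : Matrix (Fin m) (Fin n) ℝ} (hA : A ≠ 0)
    (hrow : ∀ i, sqNorm (A i) ≤ 1) {b : Fin m → ℝ} {z : Fin n → ℝ} (hz : A *ᵥ z = b)
    {x0 : Fin n → ℝ} (hx0 : x0 - z ∈ LinearMap.range Aᵀ.mulVecLin) (k : ℕ) :
    (1 / (m : ℝ) ^ k) * ∑ s : Fin k → Fin m, sqNorm (rkIterate A b x0 k s - z) ≤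
      (1 - minPosEig (Aᵀ * A) / (m : ℝ)) ^ k * sqNorm (x0 - z) := by
  subst hz
  obtain ⟨i, -⟩ : ∃ i, A i ≠ 0 := Function.ne_iff.mp hA
  have hm : (m : ℝ) ≠ 0 := Nat.cast_ne_zero.mpr i.pos.ne'
  rw [one_sub_div hm, div_pow, one_div_mul_eq_div, div_mul_eq_mul_div]
  exact div_le_div_of_nonneg_right (sum_sqNorm_rkIterate_sub_le hA hrow hx0 k) (by positivity)

end RandomizedKaczmarz

theorem rk_expected_convergence {m n : ℕ}
    (A : Matrix (Fin m) (Fin n) ℝ) (hA : A ≠ 0)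
    (hstd : ∀ i : Fin m, ∑ j, (A i j) ^ 2 = 1)
    (b : Fin m → ℝ)
    (xstar : Fin n → ℝ) (hconsistent : A.mulVec xstar = b)
    (hxstar : xstar ∈ Set.range Aᵀ.mulVec)
    (x0 : Fin n → ℝ) (hx0 : x0 ∈ Set.range Aᵀ.mulVec)
    (k : ℕ) :
    (1 / (m : ℝ) ^ k) *
        ∑ s : Fin k → Fin m, sqNorm (rkIterate A b x0 k s - xstar) ≤
      (1 - minPosEig (Aᵀ * A) / (m : ℝ)) ^ k * sqNorm (x0 - xstar) :=
  rk_expected_convergence_general hA (fun i => (hstd i).le) hconsistent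
    ((LinearMap.range Aᵀ.mulVecLin).sub_mem hx0 hxstar) k
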